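/- A smooth cubic form f in four variables over 𝔽₂ has a subgroup isomorphic to S₆ contained in its stabilizer {g ∈ GL₄(𝔽₂) : f ∘ g = f} if and only if f vanishes at every point of 𝔽₂⁴ (i.e., the cubic surface f = 0 passes through all 15 points of ℙ³(𝔽₂)). -/

import Mathlib

open MvPolynomial

noncomputable section

/-- The field with two elements. -/
abbrev F2 : Type := ZMod 2

/-- An algebraic closure of `F2`. -/
abbrev Kbar : Type := AlgebraicClosure F2

/-- Linear substitution action of a matrix `g` on a polynomial `f`:
`(act g f)(x) = f (g * x)`, i.e. the variable `X i` is replaced by `∑ j, g i j • X j`. -/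
def act (g : Matrix (Fin 4) (Fin 4) F2) (f : MvPolynomial (Fin 4) F2) :
    MvPolynomial (Fin 4) F2 :=
  aeval (fun i => ∑ j, g i j • X j) f

lemma act_one (f : MvPolynomial (Fin 4) F2) : act 1 f = f := by
  have h : (fun i => ∑ j, (1 : Matrix (Fin 4) (Fin 4) F2) i j • (X j : MvPolynomial (Fin 4) F2))
      = X := by
    funext i
    simp [Matrix.one_apply, ite_smul]
  simp [act, h]

lemma act_act (g h : Matrix (Fin 4) (Fin 4) F2) (f : MvPolynomial (Fin 4) F2) :
    act g (act h f) = act (h * g) f := by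
  show (aeval _) ((aeval _) f) = _
  rw [← AlgHom.comp_apply, comp_aeval]
  have key : (fun i => (aeval fun i => ∑ j, g i j • (X j : MvPolynomial (Fin 4) F2))
        (∑ j, h i j • (X j : MvPolynomial (Fin 4) F2)))
      = fun i => ∑ j, (h * g) i j • (X j : MvPolynomial (Fin 4) F2) := by
    funext i
    simp only [map_sum, map_smul, aeval_X, Matrix.mul_apply, Finset.smul_sum, smul_smul,
      Finset.sum_smul]
    rw [Finset.sum_comm]
  rw [key]
  rfl

/-- The stabilizer of a polynomial `f` under the linear-substitution action of `GL₄(𝔽₂)`. -/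
def stab (f : MvPolynomial (Fin 4) F2) : Subgroup (GL (Fin 4) F2) where
  carrier := {g | act (g : Matrix (Fin 4) (Fin 4) F2) f = f}
  one_mem' := by simpa using act_one f
  mul_mem' := by
    intro a b ha hb
    simp only [Set.mem_setOf_eq] at *
    have : act ((↑(a * b) : Matrix (Fin 4) (Fin 4) F2)) f = act ↑b (act ↑a f) := by
      rw [act_act]; rfl
    rw [this, ha, hb]
  inv_mem' := by
    intro a ha
    simp only [Set.mem_setOf_eq] at *
    have h2 := congrArg (act ((↑(a⁻¹) : Matrix (Fin 4) (Fin 4) F2))) ha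
    rw [act_act] at h2
    rw [Units.mul_inv, act_one] at h2
    exact h2.symm

/-- A smooth cubic form over `𝔽₂`: homogeneous of degree `3`, such that over an algebraic
closure the only common zero of `f` and its four partial derivatives is the origin. -/
def IsSmoothCubic (f : MvPolynomial (Fin 4) F2) : Prop :=
  f.IsHomogeneous 3 ∧
    ∀ v : Fin 4 → Kbar,
      eval v (map (algebraMap F2 Kbar) f) = 0 →
      (∀ i : Fin 4, eval v (map (algebraMap F2 Kbar) (pderiv i f)) = 0) →
      v = 0

/-- The cubic form `x²t + y²z + yz² + xt²`. -/
def c0 : MvPolynomial (Fin 4) F2 :=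
  X 0 ^ 2 * X 3 + X 1 ^ 2 * X 2 + X 1 * X 2 ^ 2 + X 0 * X 3 ^ 2

/-!
If `S₆` acts faithfully on `𝔽₂⁴`, then every orbit of nonzero vectors has at least ten elements, so
there is only one: `f` takes the same value at all fifteen points. The sum of the values of a form
of degree `3 < 4` is zero, so this common value is zero.

Conversely, a cubic form vanishing at every point has no squarefree monomial, hence is
`∑ A i j x_i x_j²` for a matrix `A`. Its partial derivatives are the coordinates of `A x²`, so
smoothness makes `A` invertible, and `vᵀ A v = f v = 0` makes it alternating. Since squaring is
additive and fixes `𝔽₂`, a linear substitution `P` turns `A` into `Pᵀ A P`. All nondegenerate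
alternating forms are equivalent, and `S₆` preserves the one that the dot product induces on the
even-weight vectors of `𝔽₂⁶` modulo the all-ones vector.
-/

open scoped Matrix

section PermutationAction

variable {G : Type*} [Group G]

theorem prime_dvd_card_of_forall_smul_ne {X : Type*} [MulAction G X] [Finite X] {p : ℕ}
    [Fact p.Prime] {g : G} (hg : orderOf g = p) (h : ∀ x : X, g • x ≠ x) : p ∣ Nat.card X := by
  have hp : IsPGroup p (Subgroup.zpowers g) :=
    .of_card (n := 1) (by rw [Nat.card_zpowers, hg, pow_one])
  have : IsEmpty (MulAction.fixedPoints (Subgroup.zpowers g) X) :=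
    ⟨fun x => h x (x.2 ⟨g, Subgroup.mem_zpowers g⟩)⟩
  simpa [Nat.modEq_zero_iff_dvd] using hp.card_modEq_card_fixedPoints X

/- The fixed points of `g` form a subgroup of order `q ^ k` with `k ≤ n` and `q ^ k ≡ q ^ n = 1`
modulo `p`, so `n ∣ k`: either only `0` is fixed, or everything is. -/
theorem eq_zero_of_smul_eq_self {V : Type*} [AddGroup V] [DistribMulAction G V]
    [FaithfulSMul G V] {p q n : ℕ} [Fact p.Prime] (hq : q.Prime) (hV : Nat.card V = q ^ n)
    (hn : orderOf (q : ZMod p) = n) {g : G} (hg : orderOf g = p) {v : V} (hv : g • v = v) :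
    v = 0 := by
  have : Finite V := Nat.finite_of_card_ne_zero (hV ▸ pow_ne_zero n hq.ne_zero)
  let F := FixedPoints.addSubgroup (Subgroup.zpowers g) V
  have mem_F {w : V} : w ∈ F ↔ g • w = w := by
    refine ⟨fun hw => hw ⟨g, Subgroup.mem_zpowers g⟩, fun hw s => ?_⟩
    exact Subgroup.zpowers_le.2 (MulAction.mem_stabilizer_iff.2 hw) s.2
  obtain ⟨k, hkn, hk⟩ := (Nat.dvd_prime_pow hq).1 (hV ▸ AddSubgroup.card_addSubgroup_dvd_card F)
  have hp : IsPGroup p (Subgroup.zpowers g) :=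
    .of_card (n := 1) (by rw [Nat.card_zpowers, hg, pow_one])
  have hmod : q ^ n ≡ q ^ k [MOD p] := hV ▸ hk ▸ hp.card_modEq_card_fixedPoints V
  have hdvd : n ∣ k := by
    rw [← hn, orderOf_dvd_iff_pow_eq_one]
    rw [← ZMod.natCast_eq_natCast_iff, Nat.cast_pow, Nat.cast_pow, ← hn, pow_orderOf_eq_one] at hmod
    exact hmod.symm
  rcases k.eq_zero_or_pos with rfl | hpos
  · have hF : F = ⊥ := AddSubgroup.card_eq_one.1 (by simpa using hk)
    simpa [hF] using mem_F.2 hv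
  · have hF : F = ⊤ :=
      AddSubgroup.eq_top_of_card_eq F (by rw [hk, hV, hkn.antisymm (Nat.le_of_dvd hpos hdvd)])
    have hg1 : g = 1 := FaithfulSMul.eq_of_smul_eq_smul (α := V) fun w => by
      rw [one_smul, mem_F.1 (hF ▸ AddSubgroup.mem_top w)]
    exact absurd (hg ▸ orderOf_eq_one_iff.2 hg1) (Fact.out : p.Prime).ne_one

variable {α : Type*} [Fintype α] [DecidableEq α] (hα : 5 ≤ Nat.card α) (φ : Equiv.Perm α →* G)
include hα

theorem injective_of_not_alternatingGroup_le_ker (h : ¬ alternatingGroup α ≤ φ.ker) :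
    Function.Injective φ := by
  by_contra hφ
  rw [← MonoidHom.ker_eq_bot_iff, ← Ne, ← Subgroup.nontrivial_iff_ne_bot] at hφ
  exact h (Equiv.Perm.alternatingGroup_le_of_normal hα hφ)

theorem alternatingGroup_le_ker_of_card_lt [Finite G] (hG : Nat.card G < (Nat.card α).factorial) :
    alternatingGroup α ≤ φ.ker := by
  by_contra h
  have := Nat.card_le_card_of_injective φ (injective_of_not_alternatingGroup_le_ker hα φ h)
  rw [Nat.card_perm] at this
  omega

end PermutationAction

section SixLetters

variable {V : Type*} [AddGroup V] [DistribMulAction (Equiv.Perm (Fin 6)) V]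
  [FaithfulSMul (Equiv.Perm (Fin 6)) V]

theorem exists_mem_alternatingGroup_orderOf_eq_five :
    ∃ g ∈ alternatingGroup (Fin 6), orderOf g = 5 := by
  have : Fact (Nat.Prime 5) := ⟨Nat.prime_five⟩
  have hcard : Nat.card (alternatingGroup (Fin 6)) = 360 := by
    rw [nat_card_alternatingGroup, Nat.card_fin]
    rfl
  obtain ⟨g, hg⟩ :=
    exists_prime_orderOf_dvd_card' (G := alternatingGroup (Fin 6)) 5 (by rw [hcard]; norm_num)
  exact ⟨g, g.2, by rw [Subgroup.orderOf_coe, hg]⟩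

/- An even permutation of order `5` moves every point of the orbit, so `5` divides its length; an
orbit of length `5` is impossible because `A₆` would act trivially on it. -/
theorem ten_le_card_orbit (hV : Nat.card V = 16) {v : V} (hv : v ≠ 0) :
    10 ≤ Nat.card (MulAction.orbit (Equiv.Perm (Fin 6)) v) := by
  have horder : orderOf ((2 : ℕ) : ZMod 5) = 4 := by
    rw [orderOf_eq_iff (by norm_num)]
    decide
  have : Fact (Nat.Prime 5) := ⟨Nat.prime_five⟩
  have : Finite V := Nat.finite_of_card_ne_zero (by rw [hV]; norm_num)
  obtain ⟨g, hgA, hg⟩ := exists_mem_alternatingGroup_orderOf_eq_five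
  set O := MulAction.orbit (Equiv.Perm (Fin 6)) v
  have hmoves (w : O) : g • w ≠ w := by
    obtain ⟨_, s, rfl⟩ := w
    intro hw
    have := eq_zero_of_smul_eq_self Nat.prime_two hV horder hg (congrArg Subtype.val hw)
    exact hv ((smul_eq_zero_iff_eq s).1 this)
  obtain ⟨k, hk⟩ := prime_dvd_card_of_forall_smul_ne hg hmoves
  have hO : Nat.card O ≠ 0 :=
    have : Nonempty O := ⟨⟨v, MulAction.mem_orbit_self v⟩⟩
    Nat.card_pos.ne'
  have hO5 : Nat.card O ≠ 5 := fun h => by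
    have hker := alternatingGroup_le_ker_of_card_lt (by simp)
      (MulAction.toPermHom (Equiv.Perm (Fin 6)) O)
      (by rw [Nat.card_perm, h, Nat.card_fin]; decide)
    exact hmoves ⟨v, MulAction.mem_orbit_self v⟩ (DFunLike.congr_fun (hker hgA) _)
  omega

theorem exists_perm_smul_eq (hV : Nat.card V = 16) {v w : V} (hv : v ≠ 0) (hw : w ≠ 0) :
    ∃ s : Equiv.Perm (Fin 6), s • v = w := by
  have : Finite V := Nat.finite_of_card_ne_zero (by rw [hV]; norm_num)
  rcases MulAction.orbit.eq_or_disjoint (G := Equiv.Perm (Fin 6)) v w with h | h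
  · exact MulAction.mem_orbit_iff.1 (h ▸ MulAction.mem_orbit_self w)
  · have hv10 := ten_le_card_orbit hV hv
    have hw10 := ten_le_card_orbit hV hw
    have hunion := Set.ncard_union_eq h
    have hle := Set.ncard_le_card (MulAction.orbit (Equiv.Perm (Fin 6)) v ∪
      MulAction.orbit (Equiv.Perm (Fin 6)) w)
    rw [Nat.card_coe_set_eq] at hv10 hw10
    omega

end SixLetters

section Evaluation

theorem eval_eq_zero_of_eval_eq_of_ne_zero {K σ : Type*} [Field K] [Fintype K] [Fintype σ]
    {f : MvPolynomial σ K} (hdeg : f.totalDegree < (Fintype.card K - 1) * Fintype.card σ)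
    (h0 : eval 0 f = 0) (h : ∀ v w, v ≠ 0 → w ≠ 0 → eval v f = eval w f) (v : σ → K) :
    eval v f = 0 := by
  classical
  by_cases hv : v = 0
  · rwa [hv]
  have hσ : Fintype.card σ ≠ 0 := by
    rintro hσ
    simp [hσ] at hdeg
  have hcard : (Fintype.card (σ → K) : K) = 0 := by
    rw [Fintype.card_fun, Nat.cast_pow, FiniteField.cast_card_eq_zero, zero_pow hσ]
  have hsum : ∑ w, (eval w f - eval v f) = -eval v f := by
    rw [Fintype.sum_eq_single 0 fun w hw => by rw [h w v hw hv, sub_self], h0, zero_sub]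
  rw [Finset.sum_sub_distrib, sum_eval_eq_zero f hdeg, Finset.sum_const, Finset.card_univ,
    nsmul_eq_mul, hcard, zero_mul, sub_zero] at hsum
  exact neg_eq_zero.1 hsum.symm

theorem eval_act (g : Matrix (Fin 4) (Fin 4) F2) (f : MvPolynomial (Fin 4) F2) (v : Fin 4 → F2) :
    eval v (act g f) = eval (g *ᵥ v) f := by
  simp only [← coe_aeval_eq_eval, RingHom.coe_coe, act]
  rw [← AlgHom.comp_apply, comp_aeval]
  congr 2
  funext i
  simp [Matrix.mulVec, dotProduct]

open scoped Matrix.Module in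
theorem eval_eq_zero_of_hom_mem_stab {f : MvPolynomial (Fin 4) F2} (hf : f.IsHomogeneous 3)
    {ρ : Equiv.Perm (Fin 6) →* GL (Fin 4) F2} (hinj : Function.Injective ρ)
    (hρ : ∀ s, ρ s ∈ stab f) (v : Fin 4 → F2) : eval v f = 0 := by
  let _ : DistribMulAction (Equiv.Perm (Fin 6)) (Fin 4 → F2) := .compHom _ ρ
  have smul_eq (s : Equiv.Perm (Fin 6)) (w : Fin 4 → F2) : s • w = (ρ s).val *ᵥ w := rfl
  have : FaithfulSMul (Equiv.Perm (Fin 6)) (Fin 4 → F2) :=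
    ⟨fun h => hinj (Units.ext (Matrix.ext_of_mulVec_single fun i => h (Pi.single i 1)))⟩
  refine eval_eq_zero_of_eval_eq_of_ne_zero ?_ ?_ (fun v w hv hw => ?_) v
  · exact hf.totalDegree_le.trans_lt (by simp)
  · rw [eval_zero, constantCoeff_eq, hf.coeff_eq_zero (by simp)]
  · obtain ⟨s, rfl⟩ := exists_perm_smul_eq (by simp) hv hw
    rw [smul_eq, ← eval_act, show act _ f = f from hρ s]

end Evaluation

section VanishingForms

variable {σ K : Type*} [Finite σ] [Field K] [Fintype K]

/- Over the field with two elements, the values of a monomial depend only on its set of variables,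
and a polynomial of degree at most one in each variable is determined by its values. -/
theorem sum_coeff_eq_zero_of_support_eq [DecidableEq σ] (hK : Fintype.card K = 2)
    {f : MvPolynomial σ K} (hf : ∀ v, eval v f = 0) (S : Finset σ) :
    ∑ m ∈ f.support with m.support = S, coeff m f = 0 := by
  let squarefree (T : Finset σ) : σ →₀ ℕ := Finsupp.indicator T fun _ _ => 1
  have support_squarefree (T : Finset σ) : (squarefree T).support = T := by
    ext i
    simp [squarefree, Finsupp.indicator_apply]
  let r : MvPolynomial σ K := ∑ m ∈ f.support, monomial (squarefree m.support) (coeff m f)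
  have eval_r (v : σ → K) : eval v r = eval v f := by
    have pow_eq (x : K) {k : ℕ} (hk : k ≠ 0) : x ^ k = x := by
      rcases eq_or_ne x 0 with rfl | hx
      · rw [zero_pow hk]
      · obtain rfl : x = 1 := by simpa [hK] using FiniteField.pow_card_sub_one_eq_one x hx
        rw [one_pow]
    rw [map_sum, eval_eq]
    refine Finset.sum_congr rfl fun m _ => ?_
    rw [eval_monomial, Finsupp.prod, support_squarefree]
    congr 1
    refine Finset.prod_congr rfl fun i hi => ?_
    rw [pow_eq _ (Finsupp.mem_support_iff.1 hi), Finsupp.indicator_of_mem hi, pow_one]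
  have degreeOf_r (i : σ) : r.degreeOf i < (Finset.univ : Finset K).card := by
    rw [Finset.card_univ, hK, degreeOf_lt_iff two_pos]
    intro s hs
    obtain ⟨m, -, hm⟩ := Finset.mem_biUnion.1 (support_sum hs)
    rw [Finset.mem_singleton.1 (support_monomial_subset hm), Finsupp.indicator_apply]
    split_ifs <;> simp
  have hr : r = 0 := eq_zero_of_eval_zero_at_prod_finset r _ degreeOf_r fun v _ =>
    (eval_r v).trans (hf v)
  have squarefree_injective : Function.Injective squarefree := fun T U h => by
    rw [← support_squarefree T, h, support_squarefree]
  have := congrArg (coeff (squarefree S)) hr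
  simpa only [r, coeff_sum, coeff_monomial, squarefree_injective.eq_iff, Finset.sum_filter,
    coeff_zero] using this

theorem coeff_eq_zero_of_card_support_eq (hK : Fintype.card K = 2) {f : MvPolynomial σ K}
    {d : ℕ} (hd : f.IsHomogeneous d) (hf : ∀ v, eval v f = 0) {m : σ →₀ ℕ}
    (hm : m.support.card = d) : coeff m f = 0 := by
  classical
  by_contra hne
  have eq_one {k : σ →₀ ℕ} (hk : coeff k f ≠ 0) (hks : k.support = m.support) {i : σ}
      (hi : i ∈ m.support) : k i = 1 := by
    rw [← hks] at hi
    have hsum : ∑ i ∈ k.support, 1 = ∑ i ∈ k.support, k i := by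
      rw [Finset.sum_const, smul_eq_mul, mul_one, hks, hm, ← hks, ← Finsupp.degree_apply]
      exact (not_imp_comm.1 hd.coeff_eq_zero hk).symm
    exact ((Finset.sum_eq_sum_iff_of_le fun i hi =>
      Nat.one_le_iff_ne_zero.2 (Finsupp.mem_support_iff.1 hi)).1 hsum i hi).symm
  have huniq : {k ∈ f.support | k.support = m.support} = {m} := by
    refine Finset.eq_singleton_iff_unique_mem.2 ⟨by simpa using hne, fun k hk => ?_⟩
    obtain ⟨hkf, hks⟩ := Finset.mem_filter.1 hk
    refine Finsupp.ext_iff'.2 ⟨hks, fun i hi => ?_⟩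
    rw [hks] at hi
    rw [eq_one (mem_support_iff.1 hkf) hks hi, eq_one hne rfl hi]
  have := sum_coeff_eq_zero_of_support_eq hK hf m.support
  rw [huniq, Finset.sum_singleton] at this
  exact hne this

end VanishingForms

theorem F2_pow_two_eq_self {σ : Type*} (v : σ → F2) : v ^ 2 = v :=
  funext fun i => ZMod.pow_card (v i)

section FrobeniusForm

variable {σ R : Type*} [CommSemiring R]

theorem exists_eq_single_add_single_of_degree_eq_three {m : σ →₀ ℕ} (hm : m.degree = 3)
    (hcard : m.support.card ≠ 3) :
    ∃ i j, m = Finsupp.single i 1 + Finsupp.single j 2 := by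
  classical
  obtain ⟨a, b, c, habc⟩ := Multiset.card_eq_three.1 ((Finsupp.card_toMultiset m).trans hm)
  obtain rfl : m = Finsupp.single a 1 + Finsupp.single b 1 + Finsupp.single c 1 := by
    rw [← Multiset.toFinsupp.injective.eq_iff] at habc
    simpa [Multiset.insert_eq_cons, ← Multiset.singleton_add, add_assoc] using habc
  have hdouble (i : σ) : Finsupp.single i 2 = Finsupp.single i 1 + Finsupp.single i 1 :=
    Finsupp.single_add i 1 1
  by_cases hab : a = b
  · exact ⟨c, a, by rw [hdouble, hab, add_comm]⟩
  by_cases hac : a = c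
  · exact ⟨b, a, by rw [hdouble, hac]; abel⟩
  by_cases hbc : b = c
  · exact ⟨a, b, by rw [hdouble, hbc, add_assoc]⟩
  refine absurd ?_ hcard
  rw [← Finsupp.toFinset_toMultiset, habc]
  exact Finset.card_eq_three.2 ⟨a, b, c, hab, hac, hbc, by simp⟩

/-- The Frobenius form `∑ A i j X_i X_j²` of a matrix `A`; a cubic form is of this shape iff none
of its monomials is squarefree. -/
def frobeniusForm [Fintype σ] (A : Matrix σ σ R) : MvPolynomial σ R :=
  X ⬝ᵥ A.map C *ᵥ X ^ 2

variable [Fintype σ]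

theorem frobeniusForm_eq_sum (A : Matrix σ σ R) :
    frobeniusForm A = ∑ i, ∑ j, monomial (Finsupp.single i 1 + Finsupp.single j 2) (A i j) := by
  simp only [frobeniusForm, dotProduct, Matrix.mulVec, Matrix.map_apply, Finset.mul_sum,
    Pi.pow_apply]
  refine Finset.sum_congr rfl fun i _ => Finset.sum_congr rfl fun j _ => ?_
  rw [mul_left_comm, X, X_pow_eq_monomial, monomial_mul, C_mul_monomial, mul_one, mul_one]

theorem eval_frobeniusForm (A : Matrix σ σ R) (v : σ → R) :
    eval v (frobeniusForm A) = v ⬝ᵥ A *ᵥ v ^ 2 := by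
  simp [frobeniusForm, dotProduct, Matrix.mulVec]

theorem coeff_frobeniusForm (A : Matrix σ σ R) (i j : σ) :
    coeff (Finsupp.single i 1 + Finsupp.single j 2) (frobeniusForm A) = A i j := by
  classical
  have hinj (k l : σ) : Finsupp.single k 1 + Finsupp.single l 2 =
      Finsupp.single i 1 + Finsupp.single j 2 ↔ k = i ∧ l = j := by
    refine ⟨fun h => ?_, fun ⟨hk, hl⟩ => by rw [hk, hl]⟩
    have hi := DFunLike.congr_fun h i
    have hj := DFunLike.congr_fun h j
    simp only [Finsupp.add_apply, Finsupp.single_apply] at hi hj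
    grind
  simp only [frobeniusForm_eq_sum, coeff_sum, coeff_monomial, hinj]
  simp [ite_and]

theorem eq_frobeniusForm_of_squarefree_coeff_eq_zero {f : MvPolynomial σ R}
    (hf : f.IsHomogeneous 3) (h : ∀ m : σ →₀ ℕ, m.support.card = 3 → coeff m f = 0) :
    f = frobeniusForm (.of fun i j => coeff (Finsupp.single i 1 + Finsupp.single j 2) f) := by
  classical
  ext m
  by_cases hm : ∃ i j, m = Finsupp.single i 1 + Finsupp.single j 2
  · obtain ⟨i, j, rfl⟩ := hm
    rw [coeff_frobeniusForm, Matrix.of_apply]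
  · have hf0 : coeff m f = 0 := by
      by_cases hd : m.degree = 3
      · refine h m (by_contra fun hcard => hm ?_)
        exact exists_eq_single_add_single_of_degree_eq_three hd hcard
      · exact hf.coeff_eq_zero hd
    rw [hf0, frobeniusForm_eq_sum, coeff_sum, Finset.sum_eq_zero]
    intro i _
    rw [coeff_sum, Finset.sum_eq_zero]
    exact fun j _ => by rw [coeff_monomial, if_neg fun hij => hm ⟨i, j, hij.symm⟩]

theorem eval_pderiv_frobeniusForm [CharP R 2] (A : Matrix σ σ R) (v : σ → R) (i : σ) :
    eval v (pderiv i (frobeniusForm A)) = (A *ᵥ v ^ 2) i := by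
  classical
  have hsq (j : σ) : pderiv i (X j ^ 2 : MvPolynomial σ R) = 0 := by
    rw [pderiv_pow, CharP.cast_eq_zero, zero_mul, zero_mul]
  simp [frobeniusForm, dotProduct, Matrix.mulVec, hsq, pderiv_X, Pi.single_apply]

theorem exists_eq_frobeniusForm_of_eval_eq_zero {f : MvPolynomial σ F2} (hf : f.IsHomogeneous 3)
    (h : ∀ v, eval v f = 0) : ∃ A : Matrix σ σ F2, f = frobeniusForm A :=
  ⟨_, eq_frobeniusForm_of_squarefree_coeff_eq_zero hf fun _ =>
    coeff_eq_zero_of_card_support_eq (ZMod.card 2) hf h⟩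

theorem act_frobeniusForm (P A : Matrix (Fin 4) (Fin 4) F2) :
    act P (frobeniusForm A) = frobeniusForm (Pᵀ * A * P) := by
  have hX : (fun i => ∑ j, P i j • (X j : MvPolynomial (Fin 4) F2)) = P.map C *ᵥ X := by
    funext i
    simp [Matrix.mulVec, dotProduct, smul_eq_C_mul]
  have hX2 : (P.map C *ᵥ X : Fin 4 → MvPolynomial (Fin 4) F2) ^ 2 = P.map C *ᵥ X ^ 2 := by
    funext i
    simp [Matrix.mulVec, dotProduct, sum_pow_char 2, mul_pow, ← C_pow, ZMod.pow_card]
  have hact : act P (frobeniusForm A) =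
      (P.map C *ᵥ X) ⬝ᵥ A.map C *ᵥ (P.map C *ᵥ X : Fin 4 → MvPolynomial (Fin 4) F2) ^ 2 := by
    simp [act, hX, frobeniusForm, dotProduct, Matrix.mulVec]
  rw [hact, hX2, frobeniusForm, Matrix.map_mul, Matrix.map_mul, Matrix.transpose_map,
    ← Matrix.mulVec_mulVec, ← Matrix.mulVec_mulVec, Matrix.dotProduct_mulVec X,
    Matrix.vecMul_transpose]

end FrobeniusForm

theorem det_ne_zero_of_isSmoothCubic_frobeniusForm {A : Matrix (Fin 4) (Fin 4) F2}
    (hA : IsSmoothCubic (frobeniusForm A)) : A.det ≠ 0 := by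
  intro hdet
  obtain ⟨v, hv, hAv⟩ := Matrix.exists_mulVec_eq_zero_iff.2 hdet
  have eval_map_algebraMap (p : MvPolynomial (Fin 4) F2) :
      eval (algebraMap F2 Kbar ∘ v) (map (algebraMap F2 Kbar) p) =
        algebraMap F2 Kbar (eval v p) := by
    rw [eval_map, eval₂_comp]
  have hv0 : algebraMap F2 Kbar ∘ v = 0 := by
    refine hA.2 _ ?_ fun i => ?_
    · rw [eval_map_algebraMap, eval_frobeniusForm, F2_pow_two_eq_self, hAv, dotProduct_zero,
        map_zero]
    · rw [eval_map_algebraMap, eval_pderiv_frobeniusForm, F2_pow_two_eq_self, hAv, Pi.zero_apply,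
        map_zero]
  exact hv (funext fun i => (algebraMap F2 Kbar).injective (by simpa using congrFun hv0 i))

section HyperbolicPairs

variable {K V : Type*} [Field K] [AddCommGroup V] [Module K V] {B : LinearMap.BilinForm K V}

theorem exists_apply_eq_one_of_separatingLeft (hB : B.SeparatingLeft) {p : V} (hp : p ≠ 0) :
    ∃ q, B p q = 1 := by
  obtain ⟨q, hq⟩ := not_forall.1 (mt (hB p) hp)
  exact ⟨(B p q)⁻¹ • q, by rw [map_smul, smul_eq_mul, inv_mul_cancel₀ hq]⟩

theorem exists_orthogonal_sub_mem_span (hB : B.IsAlt) {p q : V} (hpq : B p q = 1) (w : V) :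
    ∃ w', B p w' = 0 ∧ B q w' = 0 ∧ w - w' ∈ Submodule.span K {p, q} := by
  have hqp : B q p = -1 := by rw [← hB.neg_eq p q, hpq]
  refine ⟨w - B p w • q + B q w • p, ?_, ?_, ?_⟩
  · simp [hpq, hB.self_eq_zero]
  · simp [hqp, hB.self_eq_zero]
  · rw [Submodule.mem_span_pair]
    exact ⟨-B q w, B p w, by module⟩

theorem exists_hyperbolic_pairs (hB : B.IsAlt) (hsep : B.SeparatingLeft)
    (hV : 2 < Module.finrank K V) :
    ∃ p q r s, B p q = 1 ∧ B r s = 1 ∧ B p r = 0 ∧ B p s = 0 ∧ B q r = 0 ∧ B q s = 0 := by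
  have : Nontrivial V := Module.nontrivial_of_finrank_pos (by omega : 0 < Module.finrank K V)
  obtain ⟨p, hp⟩ := exists_ne (0 : V)
  obtain ⟨q, hpq⟩ := exists_apply_eq_one_of_separatingLeft hsep hp
  obtain ⟨w, hw⟩ : ∃ w, w ∉ Submodule.span K {p, q} := by
    classical
    by_contra! h
    have hle := finrank_span_finset_le_card (R := K) ({p, q} : Finset V)
    rw [Set.finrank, Finset.coe_pair, Submodule.eq_top_iff'.2 h, finrank_top] at hle
    exact absurd (hle.trans Finset.card_le_two) (by omega)
  obtain ⟨r, hpr, hqr, hr⟩ := exists_orthogonal_sub_mem_span hB hpq w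
  have hr0 : r ≠ 0 := by
    rintro rfl
    exact hw (by simpa using hr)
  obtain ⟨w', hw'⟩ := exists_apply_eq_one_of_separatingLeft hsep hr0
  obtain ⟨s, hps, hqs, hs⟩ := exists_orthogonal_sub_mem_span hB hpq w'
  have hrs : B r (w' - s) = 0 := by
    obtain ⟨a, b, hab⟩ := Submodule.mem_span_pair.1 hs
    rw [← hab, map_add, map_smul, map_smul, hB.isRefl p r hpr, hB.isRefl q r hqr, smul_zero,
      smul_zero, add_zero]
  rw [map_sub, hw', sub_eq_zero] at hrs
  exact ⟨p, q, r, s, hpq, hrs.symm, hpr, hps, hqr, hqs⟩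

end HyperbolicPairs

/-- The Gram matrix of two orthogonal hyperbolic pairs `(e₀, e₃)` and `(e₁, e₂)`; its Frobenius form
is `c0`. -/
def hyperbolicGram : Matrix (Fin 4) (Fin 4) F2 :=
  !![0, 0, 0, 1; 0, 0, 1, 0; 0, 1, 0, 0; 1, 0, 0, 0]

theorem frobeniusForm_hyperbolicGram : frobeniusForm hyperbolicGram = c0 := by
  simp [frobeniusForm, hyperbolicGram, dotProduct, Matrix.mulVec, Fin.sum_univ_four, c0]
  ring

theorem exists_transpose_mul_mul_eq_hyperbolicGram {A : Matrix (Fin 4) (Fin 4) F2}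
    (hdet : A.det ≠ 0) (halt : ∀ v, v ⬝ᵥ A *ᵥ v = 0) :
    ∃ P : GL (Fin 4) F2, P.valᵀ * A * P.val = hyperbolicGram := by
  have hB : A.toBilin'.IsAlt := fun v => by rw [Matrix.toBilin'_apply', halt]
  have hsep : A.toBilin'.SeparatingLeft := (Matrix.nondegenerate_of_det_ne_zero hdet).toBilin'.1
  obtain ⟨p, q, r, s, hpq, hrs, hpr, hps, hqr, hqs⟩ := exists_hyperbolic_pairs hB hsep (by simp)
  let P : Matrix (Fin 4) (Fin 4) F2 := (Matrix.of ![p, r, s, q])ᵀ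
  have hP : Pᵀ * A * P = hyperbolicGram := by
    have hsymm (v w : Fin 4 → F2) : A.toBilin' w v = A.toBilin' v w := by
      rw [← hB.neg_eq v w, CharTwo.neg_eq]
    ext i j
    have : (Pᵀ * A * P) i j = A.toBilin' (![p, r, s, q] i) (![p, r, s, q] j) := by
      rw [Matrix.toBilin'_apply', Matrix.mul_assoc, Matrix.mul_apply']
      rfl
    rw [this]
    fin_cases i <;> fin_cases j <;> simp [hyperbolicGram, hB.self_eq_zero, *]
  have hunit : IsUnit P := by
    have hsq : hyperbolicGram * hyperbolicGram = 1 := by decide +kernel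
    refine IsUnit.of_mul_eq_one_right (hyperbolicGram * (Pᵀ * A)) ?_
    rw [mul_assoc, hP, hsq]
  exact ⟨hunit.unit, hP⟩

section StandardRepresentation

/-- Identifies `𝔽₂⁴` with the vectors of `𝔽₂⁶` both of whose halves sum to zero, a complement of
the all-ones vector in the even-weight subspace. -/
def evenLift : Matrix (Fin 6) (Fin 4) F2 :=
  !![1, 0, 0, 0; 1, 0, 0, 1; 0, 0, 0, 1; 0, 1, 0, 0; 0, 1, 1, 0; 0, 0, 1, 0]

/-- On the even-weight subspace of `𝔽₂⁶`, reduction modulo the all-ones vector in the coordinates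
given by `evenLift`. -/
def evenReduce : Matrix (Fin 4) (Fin 6) F2 :=
  !![0, 1, 1, 0, 0, 0; 0, 0, 0, 0, 1, 1; 0, 0, 0, 1, 1, 0; 1, 1, 0, 0, 0, 0]

theorem evenReduce_mul_evenLift : evenReduce * evenLift = 1 := by decide +kernel

theorem evenReduce_mulVec_const (c : F2) : (evenReduce *ᵥ fun _ => c) = 0 := by
  revert c
  decide +kernel

theorem sum_evenLift_mulVec (v : Fin 4 → F2) : ∑ i, (evenLift *ᵥ v) i = 0 := by
  have h : (1 : Fin 6 → F2) ᵥ* evenLift = 0 := by decide +kernel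
  rw [← one_dotProduct, Matrix.dotProduct_mulVec, h, zero_dotProduct]

theorem transpose_evenLift_mul_evenLift : evenLiftᵀ * evenLift = hyperbolicGram := by
  decide +kernel

theorem exists_evenLift_evenReduce_mulVec {x : Fin 6 → F2} (hx : ∑ i, x i = 0) :
    ∃ c, evenLift *ᵥ evenReduce *ᵥ x = x + fun _ => c := by
  revert x
  decide +kernel

/-- The matrix of `s ∈ S₆` acting on the even-weight subspace of `𝔽₂⁶` modulo the all-ones vector,
in the coordinates given by `evenLift`. -/
def evenPerm (s : Equiv.Perm (Fin 6)) : Matrix (Fin 4) (Fin 4) F2 :=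
  evenReduce * s⁻¹.permMatrix F2 * evenLift

theorem evenPerm_mulVec (s : Equiv.Perm (Fin 6)) (v : Fin 4 → F2) :
    evenPerm s *ᵥ v = evenReduce *ᵥ ((evenLift *ᵥ v) ∘ s.symm) := by
  rw [evenPerm, ← Matrix.mulVec_mulVec, ← Matrix.mulVec_mulVec, Matrix.permMatrix_mulVec]
  rfl

theorem exists_evenLift_evenPerm_mulVec (s : Equiv.Perm (Fin 6)) (v : Fin 4 → F2) :
    ∃ c, evenLift *ᵥ evenPerm s *ᵥ v = (evenLift *ᵥ v) ∘ s.symm + fun _ => c := by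
  rw [evenPerm_mulVec]
  refine exists_evenLift_evenReduce_mulVec ?_
  simpa [Equiv.sum_comp s.symm] using sum_evenLift_mulVec v

/-- The four-dimensional representation of `S₆` over `𝔽₂` given by `evenPerm`. -/
def evenRep : Equiv.Perm (Fin 6) →* GL (Fin 4) F2 :=
  MonoidHom.toHomUnits
    { toFun := evenPerm
      map_one' := by
        rw [evenPerm, inv_one, Matrix.permMatrix_one, Matrix.mul_one, evenReduce_mul_evenLift]
      map_mul' s t := by
        refine Matrix.ext_of_mulVec_single fun i => ?_
        rw [← Matrix.mulVec_mulVec]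
        obtain ⟨c, hc⟩ := exists_evenLift_evenPerm_mulVec t (Pi.single i 1)
        have hconst : (fun _ => c : Fin 6 → F2) ∘ s.symm = fun _ => c := rfl
        rw [evenPerm_mulVec s, hc, Pi.add_comp, Matrix.mulVec_add, hconst, evenReduce_mulVec_const,
          add_zero, evenPerm_mulVec]
        rfl }

theorem evenRep_injective : Function.Injective evenRep := by
  refine injective_of_not_alternatingGroup_le_ker (by simp) _ fun h => ?_
  have hmem : Equiv.swap 0 1 * Equiv.swap 1 2 ∈ alternatingGroup (Fin 6) := by
    rw [Equiv.Perm.mem_alternatingGroup]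
    decide
  have hne : evenPerm (Equiv.swap 0 1 * Equiv.swap 1 2) ≠ 1 := by decide +kernel
  exact hne (congrArg Units.val (h hmem))

theorem transpose_evenPerm_mul_hyperbolicGram_mul (s : Equiv.Perm (Fin 6)) :
    (evenPerm s)ᵀ * hyperbolicGram * evenPerm s = hyperbolicGram := by
  have hdot (v w : Fin 4 → F2) :
      v ⬝ᵥ hyperbolicGram *ᵥ w = (evenLift *ᵥ v) ⬝ᵥ (evenLift *ᵥ w) := by
    rw [← transpose_evenLift_mul_evenLift, ← Matrix.mulVec_mulVec, Matrix.dotProduct_mulVec,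
      Matrix.vecMul_transpose]
  have dotProduct_const {x : Fin 6 → F2} (hx : ∑ i, x i = 0) (c : F2) :
      (x ⬝ᵥ fun _ => c) = 0 := by
    rw [dotProduct, ← Finset.sum_mul, hx, zero_mul]
  have sum_comp_symm (v : Fin 4 → F2) : ∑ i, ((evenLift *ᵥ v) ∘ s.symm) i = 0 :=
    (Equiv.sum_comp s.symm _).trans (sum_evenLift_mulVec v)
  have sum_const (c : F2) : ∑ _ : Fin 6, c = 0 := by decide +revert
  apply Matrix.toBilin'.injective
  rw [← Matrix.toBilin'_comp]
  refine LinearMap.ext₂ fun v w => ?_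
  obtain ⟨c, hc⟩ := exists_evenLift_evenPerm_mulVec s v
  obtain ⟨d, hd⟩ := exists_evenLift_evenPerm_mulVec s w
  rw [LinearMap.BilinForm.comp_apply, Matrix.toLin'_apply, Matrix.toLin'_apply,
    Matrix.toBilin'_apply', Matrix.toBilin'_apply', hdot, hdot, hc, hd, add_dotProduct,
    dotProduct_add, dotProduct_add, comp_equiv_dotProduct_comp_equiv,
    dotProduct_const (sum_comp_symm v), dotProduct_const (sum_const c),
    dotProduct_comm _ (_ ∘ s.symm), dotProduct_const (sum_comp_symm w), add_zero, add_zero,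
    add_zero]

theorem evenRep_mem_stab_c0 (s : Equiv.Perm (Fin 6)) : evenRep s ∈ stab c0 := by
  change act (evenPerm s) c0 = c0
  rw [← frobeniusForm_hyperbolicGram, act_frobeniusForm, transpose_evenPerm_mul_hyperbolicGram_mul]

end StandardRepresentation

theorem exists_act_eq_c0 {f : MvPolynomial (Fin 4) F2} (hf : IsSmoothCubic f)
    (h : ∀ v, eval v f = 0) : ∃ P : GL (Fin 4) F2, act P.val f = c0 := by
  obtain ⟨A, rfl⟩ := exists_eq_frobeniusForm_of_eval_eq_zero hf.1 h
  obtain ⟨P, hP⟩ := exists_transpose_mul_mul_eq_hyperbolicGram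
    (det_ne_zero_of_isSmoothCubic_frobeniusForm hf)
    fun v => by simpa only [eval_frobeniusForm, F2_pow_two_eq_self] using h v
  exact ⟨P, by rw [act_frobeniusForm, hP, frobeniusForm_hyperbolicGram]⟩

theorem conj_mem_stab {f : MvPolynomial (Fin 4) F2} {P g : GL (Fin 4) F2}
    (hg : g ∈ stab (act P.val f)) : P * g * P⁻¹ ∈ stab f := by
  have hg' : act g.val (act P.val f) = act P.val f := hg
  change act (P.val * g.val * P⁻¹.val) f = f
  rw [← act_act, ← act_act, hg', act_act, Units.mul_inv, act_one]

theorem exists_subgroup_le_mulEquiv_iff {G M : Type*} [Group G] [Group M] {S : Subgroup G} :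
    (∃ H ≤ S, Nonempty (H ≃* M)) ↔ ∃ ρ : M →* G, Function.Injective ρ ∧ ∀ m, ρ m ∈ S := by
  constructor
  · rintro ⟨H, hH, ⟨e⟩⟩
    exact ⟨H.subtype.comp e.symm.toMonoidHom, H.subtype_injective.comp e.symm.injective,
      fun m => hH (e.symm m).2⟩
  · rintro ⟨ρ, hρ, hmem⟩
    exact ⟨ρ.range, by rintro _ ⟨m, rfl⟩; exact hmem m, ⟨(MonoidHom.ofInjective hρ).symm⟩⟩

/-- the stabilizer of a smooth cubic form `f` over `𝔽₂` contains a subgroup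
isomorphic to `S₆` if and only if `f` vanishes at every point of `𝔽₂⁴`. -/
theorem S6_action_iff_vanishing (f : MvPolynomial (Fin 4) F2) (hf : IsSmoothCubic f) :
    (∃ H : Subgroup (GL (Fin 4) F2), H ≤ stab f ∧
      Nonempty (H ≃* Equiv.Perm (Fin 6))) ↔
    (∀ v : Fin 4 → F2, eval v f = 0) := by
  rw [exists_subgroup_le_mulEquiv_iff]
  constructor
  · rintro ⟨ρ, hinj, hρ⟩
    exact eval_eq_zero_of_hom_mem_stab hf.1 hinj hρ
  · intro h
    obtain ⟨P, hP⟩ := exists_act_eq_c0 hf h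
    refine ⟨(MulAut.conj P).toMonoidHom.comp evenRep,
      (MulAut.conj P).injective.comp evenRep_injective, fun s => conj_mem_stab ?_⟩
    rw [hP]
    exact evenRep_mem_stab_c0 s
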